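/- For any t ∈ ½ℤ, the identity Σ_{(i,m)∈J^f_{-t}} r_m^i ⊗ r_i^{m+1} = −Σ_{(j,n)∈J^f_{t-1/2}} r_j^{n+1} ⊗ r_n^j holds in g ⊗ g. -/

import Mathlib

open Finsupp TensorProduct
open scoped Classical

noncomputable section

/-- sign $(-1)^{p(a)p(b)}$ expressed through the parity signs ζa, ζb ∈ {±1}. -/
def sgn2 (za zb : ℂ) : ℂ := (1 + za + zb - za * zb) / 2

/-- `homIn ev odd a ζ` : `a` is homogeneous of parity sign `ζ`. -/
def homIn {P : Type*} [AddCommGroup P] [Module ℂ P]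
    (ev odd : Submodule ℂ P) (a : P) (z : ℂ) : Prop :=
  (z = 1 ∧ a ∈ ev) ∨ (z = -1 ∧ a ∈ odd)

/-- A finite simple Lie superalgebra over ℂ with a subalgebra span{E,e,H,f,F} ≅ osp(1|2),
a compatible even nondegenerate supersymmetric invariant bilinear form, the ad(H/2)-eigenspace
½ℤ-grading, and dual bases of g^f = ker(ad f) and g^e = ker(ad e). -/
structure SS where
  g : Type
  [iag : AddCommGroup g]
  [img : Module ℂ g]
  [ifd : FiniteDimensional ℂ g]
  gev : Submodule ℂ g
  godd : Submodule ℂ g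
  gparity : IsCompl gev godd
  br : g →ₗ[ℂ] g →ₗ[ℂ] g
  br_parity : ∀ a b za zb, homIn gev godd a za → homIn gev godd b zb →
    homIn gev godd (br a b) (za * zb)
  br_skew : ∀ a b za zb, homIn gev godd a za → homIn gev godd b zb →
    br a b = -(sgn2 za zb) • br b a
  br_jacobi : ∀ a b c za zb, homIn gev godd a za → homIn gev godd b zb →
    br a (br b c) = br (br a b) c + sgn2 za zb • br b (br a c)
  simple : ∀ I : Submodule ℂ g, (∀ a, ∀ x ∈ I, br a x ∈ I) → I = ⊥ ∨ I = ⊤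
  nontriv : ∃ x : g, x ≠ 0
  B : g →ₗ[ℂ] g →ₗ[ℂ] ℂ
  B_supersym : ∀ a b za zb, homIn gev godd a za → homIn gev godd b zb →
    B a b = sgn2 za zb * B b a
  B_even : ∀ a ∈ gev, ∀ b ∈ godd, B a b = 0
  B_invariant : ∀ a b c, B (br a b) c = B a (br b c)
  B_nondeg : ∀ a, (∀ b, B a b = 0) → a = 0
  /-- the osp(1|2)-subalgebra: E, e, H, f, F -/
  Ee : g
  ee : g
  He : g
  fe : g
  Fe : g
  E_even : Ee ∈ gev
  H_even : He ∈ gev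
  F_even : Fe ∈ gev
  e_odd : ee ∈ godd
  f_odd : fe ∈ godd
  tripleHE : br He Ee = (2 : ℂ) • Ee
  tripleHF : br He Fe = (-2 : ℂ) • Fe
  tripleEF : br Ee Fe = He
  ospHe : br He ee = ee
  ospHf : br He fe = -fe
  ospee : br ee ee = (2 : ℂ) • Ee
  ospff : br fe fe = (-2 : ℂ) • Fe
  ospef : br ee fe = -He
  ospFe : br Fe ee = fe
  ospEf : br Ee fe = ee
  BHH : B He He = 2
  BEF : B Ee Fe = 1
  Bef : B ee fe = -2
  /-- the ad(H/2)-eigenspace decomposition g = ⊕_{i ∈ ½ℤ} g(i) -/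
  gr : ℚ → Submodule ℂ g
  gr_eigen : ∀ i : ℚ, ∀ x ∈ gr i, br He x = ((2 * i : ℚ) : ℂ) • x
  gr_halfint : ∀ i : ℚ, (¬ ∃ m : ℤ, i = (m : ℚ) / 2) → gr i = ⊥
  gr_top : (⨆ i : ℚ, gr i) = ⊤
  /-- index set of the bases of g^f and g^e -/
  Jf : Type
  [iJf : Fintype Jf]
  [idJf : DecidableEq Jf]
  /-- basis r_j of g^f = ker ad f -/
  rlo : Jf → g
  /-- basis r^j of g^e = ker ad e -/
  rhi : Jf → g
  sj : Jf → ℂ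
  /-- α_j, the ad(H/2)-weight of r^j -/
  αw : Jf → ℚ
  /-- 2α_j -/
  deg2 : Jf → ℕ
  deg2_eq : ∀ j, (deg2 j : ℚ) = 2 * αw j
  rlo_parity : ∀ j, homIn gev godd (rlo j) (sj j)
  rhi_parity : ∀ j, homIn gev godd (rhi j) (sj j)
  rlo_ker : ∀ j, br fe (rlo j) = 0
  rhi_ker : ∀ j, br ee (rhi j) = 0
  rlo_wt : ∀ j, rlo j ∈ gr (-(αw j))
  rhi_wt : ∀ j, rhi j ∈ gr (αw j)
  rlo_indep : LinearIndependent ℂ rlo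
  rhi_indep : LinearIndependent ℂ rhi
  rlo_span : ∀ x, br fe x = 0 → x ∈ Submodule.span ℂ (Set.range rlo)
  rhi_span : ∀ x, br ee x = 0 → x ∈ Submodule.span ℂ (Set.range rhi)
  pairrr : ∀ i j, B (rhi i) (rlo j) = if i = j then 1 else 0
  /-- r^i_m = (ad f)^m r^i -/
  rup : Jf → ℕ → g
  rup_def : ∀ j m, rup j m = ((br fe : Module.End ℂ g) ^ m) (rhi j)
  /-- normalizing constants C_{j,n} -/
  Cjn : Jf → ℕ → ℂ
  /-- dual basis r_j^n = C_{j,n} (ad e)^n r_j -/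
  rdn : Jf → ℕ → g
  rdn_def : ∀ j n, n ≤ 2 * deg2 j →
    rdn j n = Cjn j n • ((br ee : Module.End ℂ g) ^ n) (rlo j)
  rdn_zero : ∀ j n, 2 * deg2 j < n → rdn j n = 0
  dualpair : ∀ i m j n, m ≤ 2 * deg2 i → n ≤ 2 * deg2 j →
    B (rup i m) (rdn j n) = if i = j ∧ m = n then 1 else 0

attribute [instance] SS.iag SS.img SS.ifd SS.iJf SS.idJf

/-- The index set J^f_t = {(i,m) : r_i^m ∈ g(t), r^i_m ∈ g(-t)}, as a finset. -/
def SS.JfSet (S : SS) (t : ℚ) : Finset (S.Jf × ℕ) :=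
  ((Finset.univ : Finset S.Jf) ×ˢ
      Finset.range (2 * ((Finset.univ : Finset S.Jf).sup S.deg2) + 1)).filter
    (fun p => p.2 ≤ 2 * S.deg2 p.1 ∧ S.rdn p.1 p.2 ∈ S.gr t ∧ S.rup p.1 p.2 ∈ S.gr (-t))

end

noncomputable section

/-! Put `d_p = r_i^m`, `d_p⁺ = r_i^{m+1}` and `u_p = r^i_m` for `p = (i, m)`. Since `u` and `d` are
dual bases, `d_p⁺ = ∑_q (d_p⁺|d_q) u_q`, so the identity compares the coefficients of `u_p ⊗ u_q`:
it says that `(d_p⁺|d_q)` is skew in `p, q`. Duality with `u_{i,m+1} = [f, u_{i,m}]` gives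
`[f, d_p⁺] = ± d_p`, and the skewness is invariance of the form under `ad f`. The index sets match
because `(d_p⁺|d_q) ≠ 0` forces the weights of `d_p⁺` and `d_q` to cancel. -/

section Operators

variable {R A M : Type*} [CommRing R] [Ring A] [Algebra R A] [AddCommGroup M] [Module R M]

lemma lie_pow_of_lie_eq_smul {h x : A} {c : R} (hx : ⁅h, x⁆ = c • x) (n : ℕ) :
    ⁅h, x ^ n⁆ = (n * c) • x ^ n := by
  induction n with
  | zero => simp [Ring.lie_def]
  | succ n ih =>
    calc ⁅h, x ^ (n + 1)⁆ = ⁅h, x ^ n⁆ * x + x ^ n * ⁅h, x⁆ := by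
          simp only [Ring.lie_def, pow_succ]
          noncomm_ring
      _ = ((n + 1 : ℕ) * c) • x ^ (n + 1) := by
          rw [ih, hx, smul_mul_assoc, mul_smul_comm, ← pow_succ, ← add_smul]
          push_cast
          ring_nf

lemma isNilpotent_of_lie_eq_smul {K B : Type*} [Field K] [CharZero K] [Ring B] [Algebra K B]
    [FiniteDimensional K B] {h x : B} {c : K} (hc : c ≠ 0) (hx : ⁅h, x⁆ = c • x) :
    IsNilpotent x := by
  by_contra hnil
  set adh : Module.End K B := LinearMap.mulLeft K h - LinearMap.mulRight K h
  have heigen (n : ℕ) : adh.HasEigenvalue (n * c) :=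
    Module.End.hasEigenvalue_of_hasEigenvector
      ⟨Module.End.mem_eigenspace_iff.2 (lie_pow_of_lie_eq_smul hx n), fun h0 => hnil ⟨n, h0⟩⟩
  have hinj : Function.Injective fun n : ℕ => (n * c : K) :=
    fun m n hmn => Nat.cast_injective (mul_right_cancel₀ hc hmn)
  exact (Set.infinite_range_of_injective hinj).mono (Set.range_subset_iff.2 heigen)
    adh.finite_hasEigenvalue

lemma apply_pow_apply_of_lie_eq_smul {h x : Module.End R M} {c μ : R} (hx : ⁅h, x⁆ = c • x)
    {v : M} (hv : h v = μ • v) (n : ℕ) : h ((x ^ n) v) = (μ + n * c) • (x ^ n) v := by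
  have hn := LinearMap.congr_fun (lie_pow_of_lie_eq_smul hx n) v
  rw [Ring.lie_def, LinearMap.sub_apply, Module.End.mul_apply, Module.End.mul_apply, hv, map_smul,
    LinearMap.smul_apply, sub_eq_iff_eq_add'] at hn
  rw [hn, add_smul]

lemma mul_pow_odd_of_anticomm {x y h : A} {c : R} (hxy : x * y + y * x = -h)
    (hy : ⁅h, y⁆ = c • y) (k : ℕ) :
    x * y ^ (2 * k + 1) = -(y ^ (2 * k) * (h + (k * c) • 1 + y * x)) := by
  have hxy' : x * y = -h - y * x := eq_sub_of_add_eq hxy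
  have hsq : x * y ^ 2 = y ^ 2 * x - c • y := by
    rw [← hy, Ring.lie_def, pow_two, ← mul_assoc, hxy', sub_mul, mul_assoc y x y, hxy']
    noncomm_ring
  induction k with
  | zero =>
    simp only [mul_zero, zero_add, pow_one, pow_zero, one_mul, Nat.cast_zero, zero_mul, zero_smul,
      add_zero, hxy']
    abel
  | succ k ih =>
    calc x * y ^ (2 * (k + 1) + 1) = (x * y ^ 2) * y ^ (2 * k + 1) := by
          rw [mul_assoc, ← pow_add]; ring_nf
      _ = y ^ 2 * (x * y ^ (2 * k + 1)) - c • y ^ (2 * (k + 1)) := by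
          rw [hsq, sub_mul, smul_mul_assoc, mul_assoc, ← pow_succ', mul_add_one]
      _ = -(y ^ (2 * (k + 1)) * (h + ((k + 1 : ℕ) * c) • 1 + y * x)) := by
          rw [ih, mul_neg, ← mul_assoc, ← pow_add, add_comm 2, ← mul_add_one]
          simp only [mul_add, mul_smul_comm, mul_one, Nat.cast_add, Nat.cast_one, add_mul, one_mul,
            add_smul]
          abel

-- For `x, y, h` in `osp(1|2)`, this truncates the `y`-string through an extremal vector.
lemma apply_pow_apply_eq_zero_of_anticomm {x y h : Module.End R M} {c : R}
    (hxy : x * y + y * x = -h) (hy : ⁅h, y⁆ = c • y) {v : M} {k : ℕ} (hx : x v = 0)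
    (hv : h v = -(k * c) • v) : x ((y ^ (2 * k + 1)) v) = 0 := by
  rw [← Module.End.mul_apply, mul_pow_odd_of_anticomm hxy hy]
  simp [hx, hv]

end Operators

section DualFamilies

variable {R M N ι : Type*} [CommRing R] [AddCommGroup M] [Module R M] [AddCommGroup N] [Module R N]
  {B : M →ₗ[R] N →ₗ[R] R} {u : ι → M} {d : ι → N} {s : Finset ι}

lemma eq_zero_of_mem_span_of_dual [DecidableEq ι]
    (hud : ∀ i j, B (u i) (d j) = if i = j then 1 else 0) {x : M}
    (hx : x ∈ Submodule.span R (Set.range u)) (h : ∀ j, B x (d j) = 0) : x = 0 := by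
  obtain ⟨c, rfl⟩ := Finsupp.mem_span_range_iff_exists_finsupp.1 hx
  have hc : c = 0 := by
    ext j
    simpa [Finsupp.sum, hud] using h j
  simp [hc]

lemma sum_smul_eq_self_of_dual [DecidableEq ι]
    (hud : ∀ p ∈ s, ∀ q ∈ s, B (u p) (d q) = if p = q then 1 else 0)
    (hsep : ∀ y, (∀ p ∈ s, B (u p) y = 0) → y = 0) (y : N) :
    ∑ q ∈ s, B (u q) y • d q = y := by
  rw [← sub_eq_zero]
  refine hsep _ fun p hp => ?_
  rw [map_sub, map_sum, sub_eq_zero, Finset.sum_eq_single_of_mem p hp fun q hq hqp => by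
    rw [map_smul, hud p hp q hq, if_neg hqp.symm, smul_zero]]
  simp [hud p hp p hp]

lemma sum_smul_eq_self_of_separatingLeft (hB : B.SeparatingLeft)
    (hd : ∀ y, ∑ q ∈ s, B (u q) y • d q = y) (x : M) : ∑ q ∈ s, B x (d q) • u q = x := by
  rw [← sub_eq_zero]
  refine hB _ fun y => ?_
  rw [map_sub, LinearMap.sub_apply, sub_eq_zero]
  conv_rhs => rw [← hd y]
  simp [LinearMap.sum_apply, mul_comm]

end DualFamilies

lemma sum_filter_tmul_eq_neg_sum_filter_tmul {R M ι : Type*} [CommRing R] [AddCommGroup M]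
    [Module R M] {s : Finset ι} {P Q : ι → Prop} [DecidablePred P] [DecidablePred Q]
    {u w : ι → M} {a : ι → ι → R} (hw : ∀ p ∈ s, ∑ q ∈ s, a p q • u q = w p)
    (hskew : ∀ p ∈ s, ∀ q ∈ s, a p q = -a q p)
    (hPQ : ∀ p ∈ s, ∀ q ∈ s, a p q ≠ 0 → (P p ↔ Q q)) :
    ∑ p ∈ s with P p, u p ⊗ₜ[R] w p = -∑ q ∈ s with Q q, w q ⊗ₜ[R] u q := by
  have hleft : ∑ p ∈ s with P p, u p ⊗ₜ[R] w p =
      ∑ p ∈ s, ∑ q ∈ s, if P p then a p q • (u p ⊗ₜ[R] u q) else 0 := by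
    rw [Finset.sum_filter]
    refine Finset.sum_congr rfl fun p hp => ?_
    split_ifs
    · simp only [← hw p hp, TensorProduct.tmul_sum, TensorProduct.tmul_smul]
    · simp
  have hright : ∑ q ∈ s with Q q, w q ⊗ₜ[R] u q =
      ∑ q ∈ s, ∑ p ∈ s, if Q q then a q p • (u p ⊗ₜ[R] u q) else 0 := by
    rw [Finset.sum_filter]
    refine Finset.sum_congr rfl fun q hq => ?_
    split_ifs
    · simp only [← hw q hq, TensorProduct.sum_tmul, TensorProduct.smul_tmul']
    · simp
  rw [hleft, hright, Finset.sum_comm, ← Finset.sum_neg_distrib]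
  refine Finset.sum_congr rfl fun q hq => ?_
  rw [← Finset.sum_neg_distrib]
  refine Finset.sum_congr rfl fun p hp => ?_
  obtain h0 | h0 := eq_or_ne (a p q) 0
  · simp [h0, hskew q hq p hp]
  · simp only [hPQ p hp q hq h0, hskew q hq p hp, neg_smul]
    split_ifs <;> simp

lemma sgn2_one_right (z : ℂ) : sgn2 z 1 = 1 := by
  unfold sgn2; ring

lemma sgn2_neg_one_right (z : ℂ) : sgn2 z (-1) = z := by
  unfold sgn2; ring

lemma homIn_smul {P : Type*} [AddCommGroup P] [Module ℂ P] {ev odd : Submodule ℂ P} {x : P} {z : ℂ}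
    (c : ℂ) (hx : homIn ev odd x z) : homIn ev odd (c • x) z :=
  hx.imp (And.imp_right (ev.smul_mem c)) (And.imp_right (odd.smul_mem c))

namespace SS

variable {S : SS}

section Superalgebra

lemma homIn_e : homIn S.gev S.godd S.ee (-1) := Or.inr ⟨rfl, S.e_odd⟩

lemma homIn_f : homIn S.gev S.godd S.fe (-1) := Or.inr ⟨rfl, S.f_odd⟩

lemma homIn_H : homIn S.gev S.godd S.He 1 := Or.inl ⟨rfl, S.H_even⟩

variable (S) in
/-- The adjoint representation: the bracket with values in the associative algebra of
endomorphisms, so that products and commutators of the operators `ad a` make sense. -/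
abbrev ad : S.g →ₗ[ℂ] Module.End ℂ S.g := S.br

lemma ad_mul_ad {a b : S.g} {za zb : ℂ} (ha : homIn S.gev S.godd a za)
    (hb : homIn S.gev S.godd b zb) :
    S.ad a * S.ad b = S.ad (S.br a b) + sgn2 za zb • (S.ad b * S.ad a) :=
  LinearMap.ext fun c => S.br_jacobi a b c za zb ha hb

lemma lie_ad_H_ad {a : S.g} {za : ℂ} (ha : homIn S.gev S.godd a za) :
    ⁅S.ad S.He, S.ad a⁆ = S.ad (S.br S.He a) := by
  have hsgn : sgn2 1 za = 1 := by unfold sgn2; ring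
  rw [Ring.lie_def, ad_mul_ad homIn_H ha, hsgn, one_smul, add_sub_cancel_right]

lemma lie_ad_H_ad_e : ⁅S.ad S.He, S.ad S.ee⁆ = (1 : ℂ) • S.ad S.ee := by
  rw [lie_ad_H_ad homIn_e, S.ospHe, one_smul]

lemma lie_ad_H_ad_f : ⁅S.ad S.He, S.ad S.fe⁆ = (-1 : ℂ) • S.ad S.fe := by
  rw [lie_ad_H_ad homIn_f, S.ospHf, map_neg, neg_one_smul]

lemma ad_e_mul_ad_f_add : S.ad S.ee * S.ad S.fe + S.ad S.fe * S.ad S.ee = -S.ad S.He := by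
  rw [ad_mul_ad homIn_e homIn_f, S.ospef, sgn2_neg_one_right, map_neg, neg_one_smul,
    neg_add_cancel_right]

lemma isNilpotent_ad_f : IsNilpotent (S.ad S.fe) :=
  isNilpotent_of_lie_eq_smul (neg_ne_zero.2 one_ne_zero) lie_ad_H_ad_f

lemma gr_eq_eigenspace (i : ℚ) :
    S.gr i = Module.End.eigenspace (S.ad S.He) ((2 * i : ℚ) : ℂ) := by
  have hinj : Function.Injective fun i : ℚ => ((2 * i : ℚ) : ℂ) :=
    Rat.cast_injective.comp (mul_right_injective₀ two_ne_zero)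
  have hindep := (Module.End.eigenspaces_iSupIndep (S.ad S.He)).comp hinj
  exact congrFun ((hindep.le_iff_eq_of_iSup_eq_top S.gr_top).1 fun i x hx =>
    Module.End.mem_eigenspace_iff.2 (S.gr_eigen i x hx)) i

lemma mem_gr_iff {i : ℚ} {x : S.g} : x ∈ S.gr i ↔ S.ad S.He x = ((2 * i : ℚ) : ℂ) • x := by
  rw [gr_eq_eigenspace, Module.End.mem_eigenspace_iff]

lemma homIn_pow_ad {a x : S.g} {za zx : ℂ} (ha : homIn S.gev S.godd a za)
    (hx : homIn S.gev S.godd x zx) (n : ℕ) :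
    homIn S.gev S.godd ((S.ad a ^ n) x) (za ^ n * zx) := by
  induction n with
  | zero => simpa using hx
  | succ n ih =>
    rw [pow_succ', Module.End.mul_apply, pow_succ', mul_assoc]
    exact S.br_parity _ _ _ _ ha ih

end Superalgebra

section InvariantForm

lemma B_ad_right {a x : S.g} {za zx : ℂ} (ha : homIn S.gev S.godd a za)
    (hx : homIn S.gev S.godd x zx) (y : S.g) :
    S.B x (S.ad a y) = -sgn2 zx za * S.B (S.ad a x) y := by
  rw [← S.B_invariant, S.br_skew x a zx za hx ha, map_smul, LinearMap.smul_apply, smul_eq_mul]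

lemma B_ad_right_of_odd {a x : S.g} {z : ℂ} (ha : homIn S.gev S.godd a (-1))
    (hx : homIn S.gev S.godd x z) (y : S.g) : S.B x (S.ad a y) = -z * S.B (S.ad a x) y := by
  rw [B_ad_right ha hx, sgn2_neg_one_right]

-- Evenness kills the form on opposite parities, and `sgn2 z z = z`.
lemma B_symm_of_homIn {x y : S.g} {z w : ℂ} (hx : homIn S.gev S.godd x z)
    (hy : homIn S.gev S.godd y w) : S.B x y = z * S.B y x := by
  rw [S.B_supersym x y z w hx hy]
  rcases hx with ⟨rfl, -⟩ | ⟨rfl, hx⟩ <;> rcases hy with ⟨rfl, hy⟩ | ⟨rfl, -⟩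
  · norm_num [sgn2]
  · norm_num [sgn2]
  · rw [S.B_even y hy x hx]; simp
  · norm_num [sgn2]

lemma add_eq_zero_of_B_ne_zero {x y : S.g} {z a b : ℂ} (hx : homIn S.gev S.godd x z)
    (hxa : S.ad S.He x = a • x) (hyb : S.ad S.He y = b • y) (h : S.B x y ≠ 0) : a + b = 0 := by
  have hinv := B_ad_right homIn_H hx y
  rw [hxa, hyb, sgn2_one_right, map_smul, map_smul, LinearMap.smul_apply, smul_eq_mul, smul_eq_mul,
    ← mul_assoc] at hinv
  linear_combination mul_right_cancel₀ h hinv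

lemma eq_zero_of_ad_f_eq_zero {x : S.g} (hx : S.ad S.fe x = 0) (h : ∀ j, S.B (S.rhi j) x = 0) :
    x = 0 :=
  eq_zero_of_mem_span_of_dual (B := S.B.flip) (d := S.rhi)
    (fun i j => by simp [S.pairrr, eq_comm]) (S.rlo_span x hx) h

lemma eq_zero_of_ad_e_eq_zero {x : S.g} (hx : S.ad S.ee x = 0) (h : ∀ j, S.B x (S.rlo j) = 0) :
    x = 0 :=
  eq_zero_of_mem_span_of_dual S.pairrr (S.rhi_span x hx) h

lemma ad_e_eq_zero_of_ad_f_ad_e_eq_zero {y : S.g} (h : S.ad S.fe (S.ad S.ee y) = 0) :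
    S.ad S.ee y = 0 := by
  refine eq_zero_of_ad_f_eq_zero h fun j => ?_
  rw [B_ad_right_of_odd homIn_e (S.rhi_parity j), S.rhi_ker, map_zero,
    LinearMap.zero_apply, mul_zero]

end InvariantForm

section OspStrings

variable (S) in
/-- The parity sign common to `r^i_m` and `r_i^m`. -/
def paritySign (i : S.Jf) (m : ℕ) : ℂ := (-1) ^ m * S.sj i

lemma paritySign_succ (i : S.Jf) (m : ℕ) : S.paritySign i (m + 1) = -S.paritySign i m := by
  rw [paritySign, paritySign, pow_succ]
  ring

lemma paritySign_mul_self (i : S.Jf) (m : ℕ) : S.paritySign i m * S.paritySign i m = 1 := by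
  rw [paritySign, mul_mul_mul_comm, ← mul_pow]
  rcases S.rhi_parity i with ⟨h, -⟩ | ⟨h, -⟩ <;> simp [h]

lemma paritySign_ne_zero (i : S.Jf) (m : ℕ) : S.paritySign i m ≠ 0 :=
  left_ne_zero_of_mul_eq_one (paritySign_mul_self i m)

lemma rup_zero (i : S.Jf) : S.rup i 0 = S.rhi i := by simp [S.rup_def]

lemma ad_f_rup (i : S.Jf) (m : ℕ) : S.ad S.fe (S.rup i m) = S.rup i (m + 1) := by
  rw [S.rup_def, S.rup_def, pow_succ', Module.End.mul_apply]

lemma homIn_rup (i : S.Jf) (m : ℕ) : homIn S.gev S.godd (S.rup i m) (S.paritySign i m) := by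
  rw [S.rup_def]
  exact homIn_pow_ad homIn_f (S.rhi_parity i) m

lemma homIn_rdn (i : S.Jf) {m : ℕ} (hm : m ≤ 2 * S.deg2 i) :
    homIn S.gev S.godd (S.rdn i m) (S.paritySign i m) := by
  rw [S.rdn_def i m hm]
  exact homIn_smul _ (homIn_pow_ad homIn_e (S.rlo_parity i) m)

lemma ad_H_rhi (i : S.Jf) : S.ad S.He (S.rhi i) = (S.deg2 i : ℂ) • S.rhi i := by
  rw [mem_gr_iff.1 (S.rhi_wt i), ← S.deg2_eq, Rat.cast_natCast]

lemma ad_H_rlo (i : S.Jf) : S.ad S.He (S.rlo i) = -(S.deg2 i : ℂ) • S.rlo i := by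
  rw [mem_gr_iff.1 (S.rlo_wt i), mul_neg, ← S.deg2_eq, Rat.cast_neg, Rat.cast_natCast]

lemma ad_e_pow_rlo_eq_zero (i : S.Jf) : (S.ad S.ee ^ (2 * S.deg2 i + 1)) (S.rlo i) = 0 := by
  have hker := apply_pow_apply_eq_zero_of_anticomm (k := S.deg2 i)
    (by rw [add_comm, ad_e_mul_ad_f_add]) lie_ad_H_ad_e (S.rlo_ker i)
    (by rw [mul_one, ad_H_rlo])
  rw [pow_succ', Module.End.mul_apply] at hker ⊢
  exact ad_e_eq_zero_of_ad_f_ad_e_eq_zero hker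

lemma rup_eq_zero (i : S.Jf) {m : ℕ} (hm : 2 * S.deg2 i < m) : S.rup i m = 0 := by
  induction m, hm using Nat.le_induction with
  | base =>
    refine eq_zero_of_ad_e_eq_zero ?_ fun j => ?_
    · rw [S.rup_def]
      exact apply_pow_apply_eq_zero_of_anticomm ad_e_mul_ad_f_add lie_ad_H_ad_f (S.rhi_ker i)
        (by rw [mul_neg_one, neg_neg, ad_H_rhi])
    · have hinv := B_ad_right_of_odd homIn_f (homIn_rup i (2 * S.deg2 i)) (S.rlo j)
      rw [S.rlo_ker, map_zero, ad_f_rup, eq_comm] at hinv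
      exact (mul_eq_zero.1 hinv).resolve_left (neg_ne_zero.2 (paritySign_ne_zero _ _))
  | succ m _ ih => rw [← ad_f_rup, ih, map_zero]

lemma ad_e_rdn_top (i : S.Jf) : S.ad S.ee (S.rdn i (2 * S.deg2 i)) = 0 := by
  rw [S.rdn_def i _ le_rfl, map_smul, ← Module.End.mul_apply, ← pow_succ', ad_e_pow_rlo_eq_zero,
    smul_zero]

variable (S) in
/-- Twice the grading degree of `r_i^m`, that is, its `ad H`-weight. -/
def weight (i : S.Jf) (m : ℕ) : ℚ := m - S.deg2 i

lemma ad_H_rup (i : S.Jf) (m : ℕ) :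
    S.ad S.He (S.rup i m) = ((-S.weight i m : ℚ) : ℂ) • S.rup i m := by
  rw [S.rup_def, apply_pow_apply_of_lie_eq_smul lie_ad_H_ad_f (ad_H_rhi i), weight]
  push_cast
  ring_nf

lemma ad_H_rdn (i : S.Jf) {m : ℕ} (hm : m ≤ 2 * S.deg2 i) :
    S.ad S.He (S.rdn i m) = (S.weight i m : ℂ) • S.rdn i m := by
  rw [S.rdn_def i m hm, map_smul, apply_pow_apply_of_lie_eq_smul lie_ad_H_ad_e (ad_H_rlo i),
    smul_comm, weight]
  push_cast
  ring_nf

end OspStrings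

section DualBases

variable (S) in
/-- The index set `J^f` of the dual bases `r^i_m` and `r_i^m` of `g`. -/
def indexSet : Finset (S.Jf × ℕ) :=
  (Finset.univ ×ˢ Finset.range (2 * Finset.univ.sup S.deg2 + 1)).filter
    fun p => p.2 ≤ 2 * S.deg2 p.1

lemma mem_indexSet {p : S.Jf × ℕ} : p ∈ S.indexSet ↔ p.2 ≤ 2 * S.deg2 p.1 := by
  have hsup : S.deg2 p.1 ≤ Finset.univ.sup S.deg2 := Finset.le_sup (Finset.mem_univ _)
  simp only [indexSet, Finset.mem_filter, Finset.mem_product, Finset.mem_univ, Finset.mem_range,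
    true_and]
  omega

-- The orthogonal complement of the `r^i_m` is `ad f`-stable and `ad f` is nilpotent, so if it were
-- nonzero it would meet `g^f`, which pairs perfectly with `g^e`.
lemma eq_zero_of_forall_B_rup_eq_zero {y : S.g} (hy : ∀ i m, S.B (S.rup i m) y = 0) : y = 0 := by
  obtain ⟨n, hn⟩ := isNilpotent_ad_f (S := S)
  have hpow : (S.ad S.fe ^ n) y = 0 := by rw [hn, LinearMap.zero_apply]
  clear hn
  induction n generalizing y with
  | zero => simpa using hpow
  | succ n ih =>
    have hker : S.ad S.fe y = 0 := by
      refine ih (fun i m => ?_) (by rwa [pow_succ, Module.End.mul_apply] at hpow)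
      rw [B_ad_right_of_odd homIn_f (homIn_rup i m), ad_f_rup, hy, mul_zero]
    exact eq_zero_of_ad_f_eq_zero hker fun j => by rw [← rup_zero, hy]

lemma B_rup_rdn (i : S.Jf) (m : ℕ) (j : S.Jf) {n : ℕ} (hn : n ≤ 2 * S.deg2 j) :
    S.B (S.rup i m) (S.rdn j n) = if i = j ∧ m = n then 1 else 0 := by
  by_cases hm : m ≤ 2 * S.deg2 i
  · exact S.dualpair i m j n hm hn
  · rw [rup_eq_zero i (not_le.1 hm), map_zero, LinearMap.zero_apply, if_neg]
    rintro ⟨rfl, rfl⟩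
    exact hm hn

lemma rdn_ne_zero (i : S.Jf) {m : ℕ} (hm : m ≤ 2 * S.deg2 i) : S.rdn i m ≠ 0 := by
  intro h0
  simpa [h0] using B_rup_rdn i m i hm

lemma sum_B_rup_smul_rdn (y : S.g) :
    ∑ q ∈ S.indexSet, S.B (S.rup q.1 q.2) y • S.rdn q.1 q.2 = y := by
  refine sum_smul_eq_self_of_dual (u := fun q : S.Jf × ℕ => S.rup q.1 q.2)
    (d := fun q => S.rdn q.1 q.2) (fun p _ q hq => ?_)
    (fun y hy => eq_zero_of_forall_B_rup_eq_zero fun i m => ?_) y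
  · simp [B_rup_rdn _ _ _ (mem_indexSet.1 hq), Prod.ext_iff]
  · by_cases hm : m ≤ 2 * S.deg2 i
    · exact hy (i, m) (mem_indexSet.2 hm)
    · rw [rup_eq_zero i (not_le.1 hm), map_zero, LinearMap.zero_apply]

lemma sum_B_rdn_smul_rup (x : S.g) :
    ∑ q ∈ S.indexSet, S.B x (S.rdn q.1 q.2) • S.rup q.1 q.2 = x :=
  sum_smul_eq_self_of_separatingLeft S.B_nondeg sum_B_rup_smul_rdn x

lemma JfSet_eq_filter (t : ℚ) :
    S.JfSet t = S.indexSet.filter fun p => S.weight p.1 p.2 = 2 * t := by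
  rw [JfSet, ← Finset.filter_filter]
  refine Finset.filter_congr fun p hp => ?_
  have hp' := mem_indexSet.1 hp
  rw [mem_gr_iff, mem_gr_iff, ad_H_rdn _ hp', ad_H_rup, mul_neg]
  constructor
  · rintro ⟨h, -⟩
    exact_mod_cast smul_left_injective ℂ (rdn_ne_zero _ hp') h
  · intro h
    rw [h]
    exact ⟨rfl, rfl⟩

end DualBases

section SkewPairing

lemma ad_f_rdn_succ (k : S.Jf) {l : ℕ} (hl : l < 2 * S.deg2 k) :
    S.ad S.fe (S.rdn k (l + 1)) = -S.paritySign k l • S.rdn k l := by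
  rw [← sub_eq_zero]
  refine eq_zero_of_forall_B_rup_eq_zero fun i m => ?_
  rw [map_sub, B_ad_right_of_odd homIn_f (homIn_rup i m), ad_f_rup, B_rup_rdn _ _ _ hl, map_smul,
    B_rup_rdn _ _ _ hl.le]
  by_cases h : i = k ∧ m = l
  · obtain ⟨rfl, rfl⟩ := h
    simp
  · simp [h]

lemma B_rdn_succ_rdn_top (j k : S.Jf) (n : ℕ) :
    S.B (S.rdn j (n + 1)) (S.rdn k (2 * S.deg2 k)) = 0 := by
  by_cases hn : n + 1 ≤ 2 * S.deg2 j
  · have hinv := B_ad_right_of_odd homIn_e (homIn_pow_ad homIn_e (S.rlo_parity j) n)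
      (S.rdn k (2 * S.deg2 k))
    rw [ad_e_rdn_top, map_zero, eq_comm, ← Module.End.mul_apply, ← pow_succ'] at hinv
    have hB := (mul_eq_zero.1 hinv).resolve_left (neg_ne_zero.2 (paritySign_ne_zero j n))
    rw [S.rdn_def j _ hn, map_smul, LinearMap.smul_apply, hB, smul_zero]
  · rw [S.rdn_zero j _ (not_le.1 hn), map_zero, LinearMap.zero_apply]

lemma B_rdn_succ_rdn (k : S.Jf) {l : ℕ} (hl : l ≤ 2 * S.deg2 k) (j : S.Jf) {n : ℕ}
    (hn : n ≤ 2 * S.deg2 j) :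
    S.B (S.rdn k (l + 1)) (S.rdn j n) = -S.B (S.rdn j (n + 1)) (S.rdn k l) := by
  rcases hl.eq_or_lt with rfl | hl'
  · simp [B_rdn_succ_rdn_top, S.rdn_zero k _ (Nat.lt_succ_self _)]
  rcases hn.eq_or_lt with rfl | hn'
  · simp [B_rdn_succ_rdn_top, S.rdn_zero j _ (Nat.lt_succ_self _)]
  have hinv := B_ad_right_of_odd homIn_f (homIn_rdn j hn') (S.rdn k (l + 1))
  rw [ad_f_rdn_succ k hl', ad_f_rdn_succ j hn', map_smul, map_smul, LinearMap.smul_apply,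
    smul_eq_mul, smul_eq_mul, Nat.succ_eq_add_one, paritySign_succ] at hinv
  rw [B_symm_of_homIn (homIn_rdn k hl') (homIn_rdn j hn), Nat.succ_eq_add_one, paritySign_succ]
  have hY : S.B (S.rdn j n) (S.rdn k (l + 1)) =
      S.paritySign k l * S.B (S.rdn j (n + 1)) (S.rdn k l) := by
    linear_combination hinv - S.B (S.rdn j n) (S.rdn k (l + 1)) * paritySign_mul_self j n
  rw [hY]
  linear_combination -S.B (S.rdn j (n + 1)) (S.rdn k l) * paritySign_mul_self k l

lemma weight_add_weight_of_B_ne_zero {k j : S.Jf} {l n : ℕ} (hn : n ≤ 2 * S.deg2 j)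
    (h : S.B (S.rdn k (l + 1)) (S.rdn j n) ≠ 0) : S.weight k l + S.weight j n = -1 := by
  have hl : l + 1 ≤ 2 * S.deg2 k := by
    by_contra hl
    simp [S.rdn_zero k _ (not_le.1 hl)] at h
  have hsum := add_eq_zero_of_B_ne_zero (homIn_rdn k hl) (ad_H_rdn k hl) (ad_H_rdn j hn) h
  have hsum' : S.weight k (l + 1) + S.weight j n = 0 := by exact_mod_cast hsum
  rw [weight, Nat.cast_succ] at hsum'
  rw [weight]
  linarith

end SkewPairing

end SS

/-- **Lemma 6.5**: for any t ∈ ½ℤ,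
Σ_{(i,m)∈J^f_{-t}} r_m^i ⊗ r_i^{m+1} = −Σ_{(j,n)∈J^f_{t-1/2}} r_j^{n+1} ⊗ r_n^j in g ⊗ g. -/
theorem statement17 (S : SS) (t : ℚ) (ht : ∃ m : ℤ, t = (m : ℚ) / 2) :
    ∑ p ∈ S.JfSet (-t), S.rup p.1 p.2 ⊗ₜ[ℂ] S.rdn p.1 (p.2 + 1)
      = - ∑ p ∈ S.JfSet (t - 1/2), S.rdn p.1 (p.2 + 1) ⊗ₜ[ℂ] S.rup p.1 p.2 := by
  rw [SS.JfSet_eq_filter, SS.JfSet_eq_filter]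
  refine sum_filter_tmul_eq_neg_sum_filter_tmul
    (a := fun p q => S.B (S.rdn p.1 (p.2 + 1)) (S.rdn q.1 q.2))
    (fun p _ => SS.sum_B_rdn_smul_rup (S.rdn p.1 (p.2 + 1)))
    (fun p hp q hq => SS.B_rdn_succ_rdn _ (SS.mem_indexSet.1 hp) _ (SS.mem_indexSet.1 hq))
    (fun p _ q hq hpq => ?_)
  have hweight := SS.weight_add_weight_of_B_ne_zero (SS.mem_indexSet.1 hq) hpq
  constructor <;> intro h <;> linarith

end
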